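/- arXiv:1101.1724 — 2 statements merged into one kernel-verified Lean document; each statement's English description precedes it below -/
import Mathlib

section
/- For every l ≥ 1, τ_l = min{n ≥ 0 : S̄_n = 2l}; that is, the crossing times τ_l of the walk S are exactly the first hitting times of the even levels 2l by its Csaki–Vincze transform S̄. -/
noncomputable section

/-- The walk `S` associated with the sign sequence `X : {1,2,…} → {−1,1}`:
`S 0 = 0`, `S n = X 1 + ⋯ + X n`. -/
def cvWalk (X : ℕ → ℤ) (n : ℕ) : ℤ := ∑ j ∈ Finset.Icc 1 n, X j

/-- The crossing times of `S`: `τ 0 = 0` and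
`τ (l+1) = min {i > τ l : S (i-1) * S (i+1) < 0}`. -/
def cvTau (X : ℕ → ℤ) : ℕ → ℕ
  | 0 => 0
  | l + 1 => sInf {i : ℕ | cvTau X l < i ∧ cvWalk X (i - 1) * cvWalk X (i + 1) < 0}

/-- The increments of the Csaki–Vincze transform `S̄ = T(S)`:
`X̄ j = Σ_{l ≥ 0} (−1)^(l+1) · X 1 · X (j+1) · 1_{τ l + 1 ≤ j ≤ τ (l+1)}`
(the sum may be truncated to `l ≤ j` since `l ≤ τ l` whenever `τ l + 1 ≤ j`). -/
def cvXbar (X : ℕ → ℤ) (j : ℕ) : ℤ :=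
  ∑ l ∈ Finset.range (j + 1),
    (-1 : ℤ) ^ (l + 1) * X 1 * X (j + 1) *
      (if cvTau X l + 1 ≤ j ∧ j ≤ cvTau X (l + 1) then 1 else 0)

/-- The Csaki–Vincze transform `S̄ = T(S)`. -/
def cvSbar (X : ℕ → ℤ) (n : ℕ) : ℤ := ∑ j ∈ Finset.Icc 1 n, cvXbar X j

/-- `Ȳ`-type process of a walk `f`: `max_{0 ≤ k ≤ n} f k − f n`. -/
def cvYof (f : ℕ → ℤ) (n : ℕ) : ℤ :=
  (Finset.range (n + 1)).sup' Finset.nonempty_range_add_one f - f n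

/-- `Ȳ n = max_{0 ≤ k ≤ n} S̄ k − S̄ n`. -/
def cvYbar (X : ℕ → ℤ) (n : ℕ) : ℤ := cvYof (cvSbar X) n

theorem aux_walk_succ (X : ℕ → ℤ) (n : ℕ) : cvWalk X (n + 1) = cvWalk X n + X (n + 1) := by
  unfold cvWalk
  rw [Finset.sum_Icc_succ_top (by omega)]

theorem aux_sbar_succ (X : ℕ → ℤ) (n : ℕ) : cvSbar X (n + 1) = cvSbar X n + cvXbar X (n + 1) := by
  unfold cvSbar
  rw [Finset.sum_Icc_succ_top (by omega)]

theorem aux_tau_spec (X : ℕ → ℤ)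
    (hinf : {i : ℕ | 1 ≤ i ∧ cvWalk X (i - 1) * cvWalk X (i + 1) < 0}.Infinite) (l : ℕ) :
    cvTau X l < cvTau X (l + 1) ∧
      cvWalk X (cvTau X (l + 1) - 1) * cvWalk X (cvTau X (l + 1) + 1) < 0 := by
  have hne : {i : ℕ | cvTau X l < i ∧ cvWalk X (i - 1) * cvWalk X (i + 1) < 0}.Nonempty := by
    obtain ⟨i, hi, hlt⟩ := hinf.exists_gt (cvTau X l)
    exact ⟨i, hlt, hi.2⟩
  have := Nat.sInf_mem hne
  rw [cvTau]
  exact this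

theorem aux_tau_min (X : ℕ → ℤ) (l k : ℕ) (h1 : cvTau X l < k) (h2 : k < cvTau X (l + 1)) :
    0 ≤ cvWalk X (k - 1) * cvWalk X (k + 1) := by
  by_contra h
  rw [cvTau] at h2
  exact Nat.notMem_of_lt_sInf h2 ⟨h1, by omega⟩

theorem aux_xbar (X : ℕ → ℤ) (hm : StrictMono (cvTau X)) (l j : ℕ)
    (h1 : cvTau X l < j) (h2 : j ≤ cvTau X (l + 1)) :
    cvXbar X j = (-1 : ℤ) ^ (l + 1) * X 1 * X (j + 1) := by
  unfold cvXbar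
  have hl : l ≤ cvTau X l := hm.id_le l
  rw [Finset.sum_eq_single l]
  · rw [if_pos ⟨h1, h2⟩, mul_one]
  · intro b _ hb
    rw [if_neg, mul_zero]
    rintro ⟨h3, h4⟩
    rcases lt_or_gt_of_ne hb with h | h
    · have := hm.monotone (show b + 1 ≤ l from h)
      omega
    · have := hm.monotone (show l + 1 ≤ b from h)
      omega
  · intro h
    simp at h
    omega

theorem aux_nonneg (X : ℕ → ℤ) (hX : ∀ j, 1 ≤ j → X j = 1 ∨ X j = -1) (l : ℕ) (e : ℤ)
    (he : e = 1 ∨ e = -1) (h0 : cvWalk X (cvTau X l) = 0) (h1 : cvWalk X (cvTau X l + 1) = e)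
    (d : ℕ) (hd : cvTau X l + d < cvTau X (l + 1)) :
    0 ≤ e * cvWalk X (cvTau X l + d) ∧ 0 ≤ e * cvWalk X (cvTau X l + d + 1) := by
  induction d with
  | zero =>
    simp only [add_zero, h0, h1]
    rcases he with rfl | rfl <;> simp
  | succ d ih =>
    obtain ⟨a, b⟩ := ih (by omega)
    refine ⟨b, ?_⟩
    have hc := aux_tau_min X l (cvTau X l + d + 1) (by omega) hd
    rw [Nat.add_sub_cancel] at hc
    have s1 := aux_walk_succ X (cvTau X l + d)
    have s2 := aux_walk_succ X (cvTau X l + d + 1)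
    have x1 := hX (cvTau X l + d + 1) (by omega)
    have x2 := hX (cvTau X l + d + 1 + 1) (by omega)
    rw [← add_assoc]
    generalize cvWalk X (cvTau X l + d + 1 + 1) = w2 at *
    generalize cvWalk X (cvTau X l + d + 1) = w1 at *
    generalize cvWalk X (cvTau X l + d) = w0 at *
    by_contra hneg
    rcases he with rfl | rfl
    · have : w1 = 0 := by omega
      have : w2 = -1 := by omega
      have : w0 = 1 := by omega
      subst_vars
      omega
    · have : w1 = 0 := by omega
      have : w2 = 1 := by omega
      have : w0 = -1 := by omega
      subst_vars
      omega

theorem aux_sbar (X : ℕ → ℤ) (hm : StrictMono (cvTau X)) (l d : ℕ)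
    (hd : cvTau X l + d ≤ cvTau X (l + 1)) :
    cvSbar X (cvTau X l + d) = cvSbar X (cvTau X l) -
      (-1 : ℤ) ^ l * X 1 * (cvWalk X (cvTau X l + d + 1) - cvWalk X (cvTau X l + 1)) := by
  induction d with
  | zero => simp
  | succ d ih =>
    rw [← add_assoc, aux_sbar_succ, ih (by omega), aux_xbar X hm l (cvTau X l + d + 1) (by omega) hd,
      aux_walk_succ X (cvTau X l + d + 1)]
    ring

theorem aux_main (X : ℕ → ℤ) (hX : ∀ j, 1 ≤ j → X j = 1 ∨ X j = -1)
    (hinf : {i : ℕ | 1 ≤ i ∧ cvWalk X (i - 1) * cvWalk X (i + 1) < 0}.Infinite) (l : ℕ) :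
    cvWalk X (cvTau X l) = 0 ∧ cvWalk X (cvTau X l + 1) = (-1 : ℤ) ^ l * X 1 ∧
      cvSbar X (cvTau X l) = 2 * l ∧ ∀ n < cvTau X l, cvSbar X n < 2 * l := by
  have hm : StrictMono (cvTau X) := strictMono_nat_of_lt_succ fun l => (aux_tau_spec X hinf l).1
  induction l with
  | zero => simp [cvTau, cvWalk, cvSbar]
  | succ l ih =>
    obtain ⟨h0, h1, h2, h3⟩ := ih
    obtain ⟨hlt, hcr⟩ := aux_tau_spec X hinf l
    have he : (-1 : ℤ) ^ l * X 1 = 1 ∨ (-1 : ℤ) ^ l * X 1 = -1 := by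
      rcases neg_one_pow_eq_or ℤ l with h | h <;> rcases hX 1 le_rfl with h' | h' <;>
        simp [h, h']
    have hsb := aux_sbar X hm l
    have hnn := aux_nonneg X hX l _ he h0 h1
    rw [pow_succ]
    rw [h1] at hsb
    have e1 : (-1 : ℤ) ^ l * -1 * X 1 = - ((-1 : ℤ) ^ l * X 1) := by ring
    rw [e1]
    generalize (-1 : ℤ) ^ l * X 1 = e at *
    have hee : e * e = 1 := by rcases he with rfl | rfl <;> rfl
    obtain ⟨d, hd⟩ : ∃ d, cvTau X (l + 1) = cvTau X l + d + 1 :=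
      ⟨cvTau X (l + 1) - cvTau X l - 1, by omega⟩
    obtain ⟨a, b⟩ := hnn d (by omega)
    have hs := hsb (d + 1) (by omega)
    have key : cvWalk X (cvTau X (l + 1)) = 0 ∧ cvWalk X (cvTau X (l + 1) + 1) = -e := by
      rw [hd] at hcr ⊢
      rw [Nat.add_sub_cancel] at hcr
      have s1 := aux_walk_succ X (cvTau X l + d)
      have s2 := aux_walk_succ X (cvTau X l + d + 1)
      have x1 := hX (cvTau X l + d + 1) (by omega)
      have x2 := hX (cvTau X l + d + 1 + 1) (by omega)
      generalize cvWalk X (cvTau X l + d + 1 + 1) = w2 at *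
      generalize cvWalk X (cvTau X l + d + 1) = w1 at *
      generalize cvWalk X (cvTau X l + d) = w0 at *
      rcases mul_neg_iff.mp hcr with ⟨p, q⟩ | ⟨p, q⟩ <;> rcases he with rfl | rfl <;> omega
    obtain ⟨k1, k2⟩ := key
    refine ⟨k1, k2, ?_, ?_⟩
    · rw [← add_assoc, ← hd, k2, h2] at hs
      rw [hs]
      push_cast
      linear_combination 2 * hee
    · intro n hn
      push_cast
      rcases lt_or_ge n (cvTau X l) with h | h
      · have := h3 n h
        omega
      · obtain ⟨c, rfl⟩ := Nat.exists_eq_add_of_le h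
        have := (hnn c hn).2
        rw [hsb c hn.le, h2]
        linarith

/-- For every `l ≥ 1`, the crossing time `τ l` of the walk `S` is exactly the first
hitting time of the even level `2l` by the Csaki–Vincze transform `S̄ = T(S)`. -/
theorem cvTau_eq_hitting_time (X : ℕ → ℤ) (hX : ∀ j, 1 ≤ j → X j = 1 ∨ X j = -1)
    (hinf : {i : ℕ | 1 ≤ i ∧ cvWalk X (i - 1) * cvWalk X (i + 1) < 0}.Infinite)
    (l : ℕ) (hl : 1 ≤ l) :
    cvTau X l = sInf {n : ℕ | cvSbar X n = 2 * l} := by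
  obtain ⟨-, -, h2, h3⟩ := aux_main X hX hinf l
  refine le_antisymm ?_ (Nat.sInf_le h2)
  refine le_csInf ⟨_, h2⟩ ?_
  intro n hn
  by_contra h
  have := h3 n (by omega)
  have hn' : cvSbar X n = 2 * l := hn
  omega
end
end

section
/- For all integers p < n < q: if min_{p ≤ h ≤ n} S_h = min_{p ≤ h ≤ q} S_h and S⁺_{p,j} > 0 for every j with n ≤ j ≤ q, then e(Ψ_{p,n}(0)) = e(Ψ_{p,q}(0)). -/
noncomputable section

/-- The star graph `G` with `N` half-lines `D_1, …, D_N` glued at the origin, realized by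
canonical representatives in `Fin N × ℝ`: a point is a pair (ray index, distance to the
origin), the origin being represented on the ray of index `N - 1` (i.e. the ray `e_N`,
matching the convention `e(0) = e_N`). -/
def StarG (N : ℕ) : Type :=
  {p : Fin N × ℝ // 0 ≤ p.2 ∧ (p.2 = 0 → (p.1 : ℕ) = N - 1)}

namespace StarG

variable {N : ℕ}

instance : DecidableEq (StarG N) :=
  inferInstanceAs (DecidableEq {p : Fin N × ℝ // 0 ≤ p.2 ∧ (p.2 = 0 → (p.1 : ℕ) = N - 1)})

instance : MeasurableSpace (StarG N) :=
  inferInstanceAs (MeasurableSpace {p : Fin N × ℝ // 0 ≤ p.2 ∧ (p.2 = 0 → (p.1 : ℕ) = N - 1)})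

/-- The ray index `e(x)` of a point, with the convention `e(0) = e_N`. -/
def ray (x : StarG N) : Fin N := x.1.1

/-- `|x| = d(x, 0)`, the distance from `x` to the origin. -/
def nrm (x : StarG N) : ℝ := x.1.2

/-- The distance on `G`: `d(h·e_i, h'·e_j) = |h − h'|` if `i = j` and `h + h'` if
`i ≠ j`. -/
def dist (x y : StarG N) : ℝ :=
  if x.ray = y.ray then |x.nrm - y.nrm| else x.nrm + y.nrm

/-- The origin `0` of `G` (requires `N ≥ 1`). -/
def origin (hN : 1 ≤ N) : StarG N :=
  ⟨(⟨N - 1, by omega⟩, 0), le_refl 0, fun _ => rfl⟩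

/-- The point `h·e_i` (sent to the origin when `h ≤ 0`; in particular `0·e_i = 0` for
every `i`).  For `x` on the ray `D_i` and `t ≥ −|x|`, the point `x + e(x)·t` is
`pt hN (ray x) (nrm x + t)`. -/
def pt (hN : 1 ≤ N) (i : Fin N) (h : ℝ) : StarG N :=
  if hh : 0 < h then ⟨(i, h), le_of_lt hh, fun h0 => absurd h0 (ne_of_gt hh)⟩
  else origin hN

/-- `x ∈ D_i` : the point `x` lies on the `i`-th half-line (the origin lies on all). -/
def memRay (x : StarG N) (i : Fin N) : Prop := x.ray = i ∨ x.nrm = 0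

/-- `x ∈ G_ℕ` : the distance from `x` to the origin is a natural number. -/
def isLattice (x : StarG N) : Prop := ∃ m : ℕ, x.nrm = (m : ℝ)

end StarG

/-- `min_{p ≤ h ≤ n} S h` (junk value `0` when `n < p`). -/
def walkMin (S : ℤ → ℤ) (p n : ℤ) : ℤ :=
  if h : p ≤ n then (Finset.Icc p n).inf' (Finset.nonempty_Icc.mpr h) S else 0

/-- `S⁺_{p,n} = S_{p,n} − min_{p ≤ h ≤ n} S_{p,h} = S n − min_{p ≤ h ≤ n} S h`. -/
def walkPlus (S : ℤ → ℤ) (p n : ℤ) : ℤ := S n - walkMin S p n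

/-- The one-step map `Ψ_{p,p+1}` on `G_ℕ`:
`Ψ_{p,p+1}(x) = x + e(x)·S_{p,p+1}` for `x ≠ 0` and `Ψ_{p,p+1}(0) = S⁺_{p,p+1}·η_p`. -/
def psiStep {N : ℕ} (hN : 1 ≤ N) (S : ℤ → ℤ) (η : ℤ → Fin N) (p : ℤ) (x : StarG N) :
    StarG N :=
  if x.nrm = 0 then StarG.pt hN (η p) ((walkPlus S p (p + 1) : ℤ) : ℝ)
  else StarG.pt hN x.ray (x.nrm + ((S (p + 1) - S p : ℤ) : ℝ))

/-- `k`-fold composition: `psiAux hN S η p k = Ψ_{p+k-1,p+k} ∘ ⋯ ∘ Ψ_{p,p+1}`. -/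
def psiAux {N : ℕ} (hN : 1 ≤ N) (S : ℤ → ℤ) (η : ℤ → Fin N) (p : ℤ) :
    ℕ → StarG N → StarG N
  | 0 => id
  | k + 1 => fun x => psiStep hN S η (p + k) (psiAux hN S η p k x)

/-- The discrete flow of mappings `Ψ_{p,n} = Ψ_{n−1,n} ∘ ⋯ ∘ Ψ_{p,p+1}` (the identity
when `n ≤ p`). -/
def psiFlow {N : ℕ} (hN : 1 ≤ N) (S : ℤ → ℤ) (η : ℤ → Fin N) (p n : ℤ) (x : StarG N) :
    StarG N :=
  psiAux hN S η p (n - p).toNat x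

theorem aux_walkMin_self (S : ℤ → ℤ) (p : ℤ) : walkMin S p p = S p := by
  simp [walkMin]

theorem aux_walkMin_succ (S : ℤ → ℤ) (p m : ℤ) (h : p ≤ m) :
    walkMin S p (m + 1) = min (walkMin S p m) (S (m + 1)) := by
  have h' : p ≤ m + 1 := by omega
  simp only [walkMin, h, h', dif_pos]
  apply le_antisymm
  · refine le_min ?_ ?_
    · refine Finset.le_inf' _ _ fun b hb => Finset.inf'_le _ ?_
      simp only [Finset.mem_Icc] at hb ⊢
      omega
    · refine Finset.inf'_le _ ?_
      simp only [Finset.mem_Icc]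
      omega
  · refine Finset.le_inf' _ _ fun b hb => ?_
    simp only [Finset.mem_Icc] at hb
    rcases eq_or_lt_of_le hb.2 with h1 | h1
    · subst h1
      exact min_le_right _ _
    · refine (min_le_left _ _).trans (Finset.inf'_le _ ?_)
      simp only [Finset.mem_Icc]
      omega

theorem aux_walkMin_le (S : ℤ → ℤ) (p m : ℤ) (h : p ≤ m) : walkMin S p m ≤ S m := by
  simp only [walkMin, h, dif_pos]
  exact Finset.inf'_le _ (by simp [h])

theorem aux_pt_pos {N : ℕ} (hN : 1 ≤ N) (i : Fin N) (h : ℝ) (hh : 0 < h) :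
    StarG.pt hN i h = ⟨(i, h), le_of_lt hh, fun h0 => absurd h0 (ne_of_gt hh)⟩ :=
  dif_pos hh

theorem aux_pt_neg {N : ℕ} (hN : 1 ≤ N) (i : Fin N) (h : ℝ) (hh : ¬ 0 < h) :
    StarG.pt hN i h = StarG.origin hN :=
  dif_neg hh

theorem aux_pt_nrm {N : ℕ} (hN : 1 ≤ N) (i : Fin N) (h : ℝ) (hh : 0 ≤ h) :
    (StarG.pt hN i h).nrm = h := by
  by_cases h1 : 0 < h
  · exact congrArg StarG.nrm (aux_pt_pos hN i h h1)
  · rw [aux_pt_neg hN i h h1]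
    exact le_antisymm hh (not_lt.mp h1)

theorem aux_pt_ray {N : ℕ} (hN : 1 ≤ N) (i : Fin N) (h : ℝ) (hh : 0 < h) :
    (StarG.pt hN i h).ray = i :=
  congrArg StarG.ray (aux_pt_pos hN i h hh)

theorem aux_nrm {N : ℕ} (hN : 1 ≤ N) (S : ℤ → ℤ)
    (hS : ∀ n : ℤ, S n - S (n - 1) = 1 ∨ S n - S (n - 1) = -1)
    (η : ℤ → Fin N) (p : ℤ) (k : ℕ) :
    (psiAux hN S η p k (StarG.origin hN)).nrm = ((walkPlus S p (p + k) : ℤ) : ℝ) := by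
  induction k with
  | zero =>
    have h : (psiAux hN S η p 0 (StarG.origin hN)).nrm = 0 := rfl
    rw [h]
    simp [walkPlus, aux_walkMin_self]
  | succ k ih =>
    have hm : p ≤ p + (k : ℤ) := by omega
    have e : p + ((k + 1 : ℕ) : ℤ) = p + k + 1 := by push_cast; ring
    have h1 := aux_walkMin_succ S p (p + k) hm
    have h2 := aux_walkMin_succ S (p + k) (p + k) le_rfl
    rw [aux_walkMin_self] at h2
    have h3 := aux_walkMin_le S p (p + k) hm
    have h4 := hS (p + k + 1)
    rw [add_sub_cancel_right] at h4
    rw [e]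
    simp only [psiAux, psiStep]
    split_ifs with h0
    · rw [ih] at h0
      have h0' : walkPlus S p (p + k) = 0 := by exact_mod_cast h0
      rw [aux_pt_nrm]
      · unfold walkPlus at *
        norm_cast
        omega
      · unfold walkPlus at *
        norm_cast
        omega
    · rw [ih] at h0 ⊢
      have h0' : walkPlus S p (p + k) ≠ 0 := by exact_mod_cast h0
      rw [← Int.cast_add, aux_pt_nrm]
      · unfold walkPlus at *
        norm_cast
        omega
      · unfold walkPlus at *
        norm_cast
        omega

theorem aux_ray {N : ℕ} (hN : 1 ≤ N) (S : ℤ → ℤ)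
    (hS : ∀ n : ℤ, S n - S (n - 1) = 1 ∨ S n - S (n - 1) = -1)
    (η : ℤ → Fin N) (p : ℤ) (k : ℕ) (h1 : 0 < walkPlus S p (p + k))
    (h2 : 0 < walkPlus S p (p + (k + 1 : ℕ))) :
    (psiAux hN S η p (k + 1) (StarG.origin hN)).ray
      = (psiAux hN S η p k (StarG.origin hN)).ray := by
  have a := aux_nrm hN S hS η p k
  have b := aux_nrm hN S hS η p (k + 1)
  have hne : (psiAux hN S η p k (StarG.origin hN)).nrm ≠ 0 := by
    rw [a]
    exact_mod_cast h1.ne'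
  simp only [psiAux, psiStep, if_neg hne] at b ⊢
  apply aux_pt_ray
  by_contra hc
  rw [aux_pt_neg _ _ _ hc] at b
  have : ((walkPlus S p (p + (k + 1 : ℕ)) : ℤ) : ℝ) = 0 := b.symm
  have h3 : walkPlus S p (p + (k + 1 : ℕ)) = 0 := by exact_mod_cast this
  omega

/-- For all integers `p < n < q`: if `min_{p ≤ h ≤ n} S h = min_{p ≤ h ≤ q} S h` and
`S⁺_{p,j} > 0` for every `n ≤ j ≤ q`, then `e(Ψ_{p,n}(0)) = e(Ψ_{p,q}(0))`. -/
theorem psiFlow_ray_eq_of_min_eq_of_pos (N : ℕ) (hN : 1 ≤ N) (S : ℤ → ℤ)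
    (hS : ∀ n : ℤ, S n - S (n - 1) = 1 ∨ S n - S (n - 1) = -1)
    (η : ℤ → Fin N) (p n q : ℤ) (hpn : p < n) (hnq : n < q)
    (hmin : walkMin S p n = walkMin S p q)
    (hpos : ∀ j : ℤ, n ≤ j → j ≤ q → 0 < walkPlus S p j) :
    (psiFlow hN S η p n (StarG.origin hN)).ray = (psiFlow hN S η p q (StarG.origin hN)).ray := by
  obtain ⟨a, rfl⟩ : ∃ a : ℕ, n = p + a := ⟨(n - p).toNat, by omega⟩
  obtain ⟨d, rfl⟩ : ∃ d : ℕ, q = p + a + d := ⟨(q - (p + a)).toNat, by omega⟩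
  have ea : (p + (a : ℤ) - p).toNat = a := by omega
  have ed : (p + (a : ℤ) + d - p).toNat = a + d := by omega
  unfold psiFlow
  rw [ea, ed]
  have key : ∀ j : ℕ, j ≤ d → (psiAux hN S η p a (StarG.origin hN)).ray
      = (psiAux hN S η p (a + j) (StarG.origin hN)).ray := by
    intro j
    induction j with
    | zero => intro _; rfl
    | succ j ih =>
      intro hj
      rw [ih (by omega)]
      symm
      apply aux_ray hN S hS η p (a + j)
      · apply hpos <;> push_cast <;> omega
      · apply hpos <;> push_cast <;> omega
  exact key d le_rfl
end
end
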